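/- arXiv:1907.07513 — 6 statements merged into one kernel-verified Lean document; each statement's English description precedes it below -/
import Mathlib

section
/- For every integer Δ ≥ 3 and every intolerance parameter τ with 2/Δ < τ < 1, there exist a Δ-regular finite simple graph G = (V,E), a set A of agents with |A| < |V| partitioned into two types, and an improving response cycle for the one-versus-one jump Schelling game (1-1-JSG) with parameter τ on G; in particular, improving response dynamics may not converge in the 1-1-JSG for τ > 2/Δ on Δ-regular graphs. -/
open Finset
open scoped Classical

noncomputable section

namespace Schelling

variable {V A : Type*} [Fintype V] [Fintype A] {k : ℕ}

/-- The set of neighbors of agent `a` under placement `p`. -/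
def nbrs (G : SimpleGraph V) (p : A → V) (a : A) : Finset A :=
  Finset.univ.filter fun b => G.Adj (p a) (p b)

/-- `|N⁺_p(a)|`: the number of neighbors of `a` under `p` having the same type as `a`. -/
def posCount (G : SimpleGraph V) (t : A → Fin k) (p : A → V) (a : A) : ℕ :=
  (Finset.univ.filter fun b => G.Adj (p a) (p b) ∧ t b = t a).card

/-- One-versus-all `|N⁻_p(a)|`: the number of neighbors of `a` whose type differs from `t a`. -/
def negCountAll (G : SimpleGraph V) (t : A → Fin k) (p : A → V) (a : A) : ℕ :=
  (Finset.univ.filter fun b => G.Adj (p a) (p b) ∧ t b ≠ t a).card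

/-- One-versus-one `|N⁻_p(a)|`: the size of a largest set of neighbors of `a`
of one common type different from `t a`. -/
def negCountOne (G : SimpleGraph V) (t : A → Fin k) (p : A → V) (a : A) : ℕ :=
  (Finset.univ.filter fun T : Fin k => T ≠ t a).sup fun T =>
    (Finset.univ.filter fun b => G.Adj (p a) (p b) ∧ t b = T).card

/-- The cost of agent `a` in the one-versus-all version. -/
def costAll (G : SimpleGraph V) (t : A → Fin k) (τ : ℝ) (p : A → V) (a : A) : ℝ :=
  if nbrs G p a = ∅ then τ
  else max 0 (τ - (posCount G t p a : ℝ) /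
    ((posCount G t p a : ℝ) + (negCountAll G t p a : ℝ)))

/-- The cost of agent `a` in the one-versus-one version. -/
def costOne (G : SimpleGraph V) (t : A → Fin k) (τ : ℝ) (p : A → V) (a : A) : ℝ :=
  if nbrs G p a = ∅ then τ
  else max 0 (τ - (posCount G t p a : ℝ) /
    ((posCount G t p a : ℝ) + (negCountOne G t p a : ℝ)))

/-- A swap of the (distinct) agents `a` and `b` turning placement `p` into `q`,
which strictly decreases the cost of both agents (cost function `c`). -/
def SwapMove (c : (A → V) → A → ℝ) (p q : A → V) (a b : A) : Prop :=
  a ≠ b ∧ q = p ∘ (Equiv.swap a b) ∧ c q a < c p a ∧ c q b < c p b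

/-- `q` is obtained from `p` by an improving swap. -/
def ImprovingSwap (c : (A → V) → A → ℝ) (p q : A → V) : Prop :=
  ∃ a b, SwapMove c p q a b

/-- A placement is swap-stable if it admits no improving swap. -/
def SwapStable (c : (A → V) → A → ℝ) (p : A → V) : Prop :=
  ∀ q, ¬ ImprovingSwap c p q

/-- Some finite sequence of improving swaps starting at `p₀` ends in a swap-stable placement. -/
def ReachesStableSwap (c : (A → V) → A → ℝ) (p₀ : A → V) : Prop :=
  ∃ (n : ℕ) (q : ℕ → A → V), q 0 = p₀ ∧
    (∀ i < n, ImprovingSwap c (q i) (q (i + 1))) ∧ SwapStable c (q n)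

/-- A jump of agent `a` to the node `v` (unoccupied under `p`) turning placement `p`
into `q`, which strictly decreases the cost of `a` (cost function `c`). -/
def JumpMove (c : (A → V) → A → ℝ) (p q : A → V) (a : A) (v : V) : Prop :=
  (∀ b, p b ≠ v) ∧ q = Function.update p a v ∧ c q a < c p a

/-- `q` is obtained from `p` by an improving jump. -/
def ImprovingJump (c : (A → V) → A → ℝ) (p q : A → V) : Prop :=
  ∃ a v, JumpMove c p q a v

/-- A placement is jump-stable if it admits no improving jump. -/
def JumpStable (c : (A → V) → A → ℝ) (p : A → V) : Prop :=
  ∀ q, ¬ ImprovingJump c p q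

/-- Some finite sequence of improving jumps starting at `p₀` ends in a jump-stable placement. -/
def ReachesStableJump (c : (A → V) → A → ℝ) (p₀ : A → V) : Prop :=
  ∃ (n : ℕ) (q : ℕ → A → V), q 0 = p₀ ∧
    (∀ i < n, ImprovingJump c (q i) (q (i + 1))) ∧ JumpStable c (q n)

/-- The placement cost: the number of discontent agents (one-versus-all cost). -/
def placementCost (G : SimpleGraph V) (t : A → Fin k) (τ : ℝ) (p : A → V) : ℕ :=
  (Finset.univ.filter fun a => costAll G t τ p a ≠ 0).card

/-- A graph is `Δ`-regular if every node has exactly `Δ` neighbors. -/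
def IsRegular (G : SimpleGraph V) (Δ : ℕ) : Prop :=
  ∀ v : V, (Finset.univ.filter fun u => G.Adj v u).card = Δ

/-- Adjacency in the path on four nodes. -/
def padj (x y : Fin 4) : Bool := (x.val + 1 == y.val) || (y.val + 1 == x.val)

def pmid (x : Fin 4) : Bool := (x.val == 1) || (x.val == 2)

/-- Adjacency in the core graph. -/
def cadj {L : Type} : Fin 4 ⊕ L → Fin 4 ⊕ L → Prop
  | .inl x, .inl y => padj x y = true
  | .inl x, .inr _ => pmid x = true
  | .inr _, .inl y => pmid y = true
  | .inr _, .inr _ => False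

def core (L : Type) : SimpleGraph (Fin 4 ⊕ L) where
  Adj := cadj
  symm := ⟨by
    rintro (x | x) (y | y) h <;> simp only [cadj] at h ⊢
    · revert x y; decide
    · exact h
    · exact h⟩
  loopless := ⟨by
    rintro (x | x) h <;> simp only [cadj] at h
    revert x; decide⟩

def tab : ℕ → Fin 3 → Fin 4
  | 1 => ![1, 2, 3]
  | 2 => ![1, 0, 3]
  | 3 => ![1, 0, 2]
  | 4 => ![3, 0, 2]
  | 5 => ![3, 1, 2]
  | 6 => ![3, 1, 0]
  | 7 => ![2, 1, 0]
  | 8 => ![2, 3, 0]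
  | 9 => ![2, 3, 1]
  | 10 => ![0, 3, 1]
  | 11 => ![0, 2, 1]
  | _ => ![0, 2, 3]

def who (i : ℕ) : Fin 3 := ⟨i % 3, Nat.mod_lt _ (by norm_num)⟩

def pcnt (f : Fin 3 → Fin 4) (j : Fin 3) : ℕ :=
  (if padj (f j) (f 0) = true then 1 else 0) + (if padj (f j) (f 1) = true then 1 else 0)
    + (if padj (f j) (f 2) = true then 1 else 0)

lemma tab_step : ∀ i : Fin 12,
    (∀ b, tab i b ≠ tab (i + 1 : ℕ) (who i)) ∧
    (∀ b, b ≠ who i → tab (i + 1 : ℕ) b = tab i b) ∧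
    ((pcnt (tab i) (who i) = 0 ∧ pmid (tab i (who i)) = false ∧
      pcnt (tab (i + 1 : ℕ)) (who i) = 1 ∧ pmid (tab (i + 1 : ℕ) (who i)) = true) ∨
     (pcnt (tab i) (who i) = 2 ∧ pmid (tab i (who i)) = true ∧
      pcnt (tab (i + 1 : ℕ)) (who i) = 1 ∧ pmid (tab (i + 1 : ℕ) (who i)) = false)) := by
  decide

lemma upd_ne {α β : Type*} {inst : DecidableEq α} (f : α → β) (a : α) (v : β) (b : α)
    (h : b ≠ a) : @Function.update α (fun _ => β) inst f a v b = f b :=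
  Function.update_of_ne h _ _

def ctype {L : Type} : Fin 3 ⊕ L → Fin 2
  | .inl _ => 0
  | .inr _ => 1

lemma costOne_eq {V A : Type*} [Fintype A] {k : ℕ} (G : SimpleGraph V) (t : A → Fin k)
    (τ : ℝ) (hτ : 0 < τ) (p : A → V) (a : A) :
    costOne G t τ p a = max 0 (τ - (posCount G t p a : ℝ) /
      ((posCount G t p a : ℝ) + (negCountOne G t p a : ℝ))) := by
  unfold costOne
  split_ifs with h
  · have : posCount G t p a = 0 := by
      unfold posCount
      rw [Finset.card_eq_zero, Finset.filter_eq_empty_iff]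
      intro b _ hb
      have : b ∈ nbrs G p a := by simp [nbrs, hb.1]
      rw [h] at this
      simp at this
    rw [this]
    simp [hτ.le]
  · rfl

lemma core_pos {L : Type} [Fintype L] (f : Fin 3 → Fin 4) (j : Fin 3) :
    posCount (core L) ctype (Sum.map f (id : L → L)) (.inl j) = pcnt f j := by
  unfold posCount pcnt
  rw [Finset.card_filter, Fintype.sum_sum_type, Fin.sum_univ_three]
  simp [core, cadj, ctype]

lemma core_neg {L : Type} [Fintype L] (f : Fin 3 → Fin 4) (j : Fin 3) :
    negCountOne (core L) ctype (Sum.map f (id : L → L)) (.inl j) =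
      if pmid (f j) = true then Fintype.card L else 0 := by
  unfold negCountOne
  have h1 : (Finset.univ.filter fun T : Fin 2 => T ≠ ctype (Sum.inl j : Fin 3 ⊕ L)) = {1} := by
    ext T
    rw [Finset.mem_filter]
    fin_cases T <;> simp [ctype]
  rw [h1, Finset.sup_singleton, Finset.card_filter, Fintype.sum_sum_type]
  simp [core, cadj, ctype]

lemma core_step (Δ : ℕ) (hΔ : 3 ≤ Δ) (τ : ℝ) (hτ1 : 2 / (Δ : ℝ) < τ) (i : ℕ) (hi : i < 12) :
    JumpMove (costOne (core (Fin (Δ - 2))) ctype τ) (Sum.map (tab i) id)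
      (Sum.map (tab (i + 1)) id) (.inl (who i)) (.inl (tab (i + 1) (who i))) := by
  obtain ⟨h1, h2, h3⟩ := tab_step ⟨i, hi⟩
  simp only at h1 h2 h3
  have hD : (3 : ℝ) ≤ Δ := by exact_mod_cast hΔ
  have hτ : 0 < τ := lt_trans (by positivity) hτ1
  have hc : ((Δ - 2 : ℕ) : ℝ) = (Δ : ℝ) - 2 := by
    rw [Nat.cast_sub (by omega)]; norm_num
  refine ⟨?_, ?_, ?_⟩
  · rintro (b | b)
    · simpa using h1 b
    · simp
  · funext b
    rcases b with b | b
    · by_cases hb : b = who i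
      · subst hb; simp
      · rw [upd_ne _ _ _ _ (by simpa using hb)]
        simp [h2 b hb]
    · simp
  · rw [costOne_eq _ _ _ hτ, costOne_eq _ _ _ hτ, core_pos, core_pos, core_neg, core_neg]
    rcases h3 with ⟨a, b, c, d⟩ | ⟨a, b, c, d⟩
    · rw [a, b, c, d]
      simp only [Fintype.card_fin, if_true, hc]
      have : 0 < (1 : ℝ) / (1 + (Δ - 2)) := by apply div_pos <;> linarith
      simp only [Nat.cast_one, Nat.cast_zero, zero_div, sub_zero]
      rw [max_eq_right hτ.le]
      apply max_lt hτ
      linarith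
    · rw [a, b, c, d]
      simp only [Fintype.card_fin, if_true, hc]
      have e : ((2 : ℕ) : ℝ) / ((2 : ℕ) + ((Δ : ℝ) - 2)) = 2 / Δ := by
        congr 1 <;> push_cast <;> ring
      rw [e, max_eq_right (by linarith : (0 : ℝ) ≤ τ - 2 / Δ)]
      apply max_lt (by linarith)
      have : 2 / (Δ : ℝ) < 1 := by rw [div_lt_one] <;> linarith
      simp
      linarith

lemma core_deg (Δ : ℕ) (hΔ : 3 ≤ Δ) (v : Fin 4 ⊕ Fin (Δ - 2)) :
    (Finset.univ.filter fun u => (core (Fin (Δ - 2))).Adj v u).card ≤ Δ := by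
  rw [Finset.card_filter, Fintype.sum_sum_type, Fin.sum_univ_four]
  rcases v with v | v
  · fin_cases v <;> simp [core, cadj, padj, pmid] <;> omega
  · simp [core, cadj, pmid]; omega

/-- Every graph of maximum degree at most `Δ` is an induced subgraph of a `Δ`-regular one. -/
lemma exists_regular {V : Type} [Fintype V] (G : SimpleGraph V) (Δ : ℕ)
    (h : ∀ v : V, (Finset.univ.filter fun u => G.Adj v u).card ≤ Δ) :
    ∃ (N : ℕ) (G' : SimpleGraph (Fin N)) (φ : V → Fin N), Function.Injective φ ∧
      (∀ x y, G'.Adj (φ x) (φ y) ↔ G.Adj x y) ∧ IsRegular G' Δ := by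
  let d : V → ℕ := fun v => (Finset.univ.filter fun u => G.Adj v u).card
  let W := V × Finset (Fin Δ)
  let R : W → W → Prop := fun x y =>
    (x.2 = y.2 ∧ G.Adj x.1 y.1) ∨ (x.1 = y.1 ∧ ∃ i : Fin Δ, i.val < Δ - d x.1 ∧
      y.2 = symmDiff x.2 {i})
  have hne : ∀ (S : Finset (Fin Δ)) i, symmDiff S {i} ≠ S := by
    intro S i hS
    rw [symmDiff_eq_left] at hS
    simp at hS
  let H : SimpleGraph W :=
    { Adj := R
      symm := ⟨by
        rintro ⟨u, S⟩ ⟨v, T⟩ (⟨h1, h2⟩ | ⟨h1, i, h2, h3⟩)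
        · exact Or.inl ⟨h1.symm, h2.symm⟩
        · refine Or.inr ⟨h1.symm, i, ?_, ?_⟩
          · simp only at h1 h2 ⊢
            rw [← h1]; exact h2
          · simp only at h3 ⊢
            rw [h3, symmDiff_symmDiff_cancel_right]⟩
      loopless := ⟨by
        rintro ⟨u, S⟩ (⟨h1, h2⟩ | ⟨h1, i, h2, h3⟩)
        · exact G.loopless.irrefl _ h2
        · exact hne _ _ h3.symm⟩ }
  let e : W ≃ Fin (Fintype.card W) := Fintype.equivFin W
  refine ⟨Fintype.card W, H.comap e.symm, fun v => e (v, ∅), ?_, ?_, ?_⟩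
  · intro x y hxy
    have := e.injective hxy
    exact (Prod.mk.inj this).1
  · intro x y
    simp only [SimpleGraph.comap_adj, Equiv.symm_apply_apply]
    constructor
    · rintro (⟨h1, h2⟩ | ⟨h1, i, h2, h3⟩)
      · exact h2
      · exact absurd h3.symm (hne _ _)
    · intro hx
      exact Or.inl ⟨rfl, hx⟩
  · intro v
    obtain ⟨⟨u, S⟩, rfl⟩ := e.surjective v
    have h1 : (Finset.univ.filter fun w => (H.comap e.symm).Adj (e (u, S)) w) =
        (((Finset.univ.filter fun w => G.Adj u w).image fun w => ((w, S) : W)) ∪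
          ((Finset.univ.filter fun i : Fin Δ => i.val < Δ - d u).image
            fun i => ((u, symmDiff S {i}) : W))).map e.toEmbedding := by
      ext w
      obtain ⟨⟨w, T⟩, rfl⟩ := e.surjective w
      simp only [SimpleGraph.comap_adj, Equiv.symm_apply_apply, Finset.mem_filter,
        Finset.mem_univ, true_and, Finset.mem_map_equiv, Finset.mem_union, Finset.mem_image]
      constructor
      · rintro (⟨h1, h2⟩ | ⟨h1, i, h2, h3⟩)
        · simp only at h1 h2
          exact Or.inl ⟨w, h2, by rw [h1]⟩
        · simp only at h1 h2 h3
          exact Or.inr ⟨i, h2, by rw [h3, h1]⟩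
      · rintro (⟨x, h1, h2⟩ | ⟨i, h1, h2⟩)
        · obtain ⟨rfl, rfl⟩ := Prod.mk.inj h2
          exact Or.inl ⟨rfl, h1⟩
        · obtain ⟨rfl, rfl⟩ := Prod.mk.inj h2
          exact Or.inr ⟨rfl, i, h1, rfl⟩
    suffices hs : (Finset.univ.filter fun w => (H.comap e.symm).Adj (e (u, S)) w).card = Δ by
      convert hs
    rw [h1, Finset.card_map, Finset.card_union_of_disjoint, Finset.card_image_of_injective,
      Finset.card_image_of_injective]
    · have h2 : (Finset.univ.filter fun i : Fin Δ => i.val < Δ - d u).card = Δ - d u := by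
        rw [Fin.card_filter_val_lt]
        omega
      rw [h2]
      have := h u
      simp only [d]
      omega
    · intro i j hij
      have := (Prod.mk.inj hij).2
      simpa using symmDiff_right_injective S this
    · intro i j hij
      exact (Prod.mk.inj hij).1
    · rw [Finset.disjoint_left]
      rintro x hx hy
      simp only [Finset.mem_image] at hx hy
      obtain ⟨a, _, rfl⟩ := hx
      obtain ⟨b, _, hb⟩ := hy
      exact hne _ _ (Prod.mk.inj hb).2

lemma cost_transport {V A V' A' : Type*} [Fintype A] [Fintype A'] {k : ℕ} (G : SimpleGraph V)
    (G' : SimpleGraph V') (φ : V → V') (hφ : ∀ x y, G'.Adj (φ x) (φ y) ↔ G.Adj x y)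
    (e : A' ≃ A) (t : A → Fin k) (τ : ℝ) (hτ : 0 < τ) (p : A → V) (a : A') :
    costOne G' (t ∘ e) τ (φ ∘ p ∘ e) a = costOne G t τ p (e a) := by
  rw [costOne_eq _ _ _ hτ, costOne_eq _ _ _ hτ]
  have key : ∀ T : Fin k, (Finset.univ.filter fun b => G'.Adj ((φ ∘ p ∘ e) a) ((φ ∘ p ∘ e) b) ∧
      (t ∘ e) b = T).card = (Finset.univ.filter fun b => G.Adj (p (e a)) (p b) ∧ t b = T).card := by
    intro T
    refine Finset.card_equiv e ?_
    intro b
    simp [hφ]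
  have h1 : posCount G' (t ∘ e) (φ ∘ p ∘ e) a = posCount G t p (e a) := key _
  have h2 : negCountOne G' (t ∘ e) (φ ∘ p ∘ e) a = negCountOne G t p (e a) := by
    unfold negCountOne
    simp only [key]
    rfl
  rw [h1, h2]

/-- For every `Δ ≥ 3` and every `2/Δ < τ < 1` there are a `Δ`-regular graph, two
surjectively used agent types on `|A| < |V|` agents and an improving response cycle for
the `1`-`1`-JSG with parameter `τ`. -/
theorem statement10 (Δ : ℕ) (hΔ : 3 ≤ Δ) (τ : ℝ) (hτ1 : 2 / (Δ : ℝ) < τ) (hτ2 : τ < 1) :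
    ∃ (N M : ℕ) (G : SimpleGraph (Fin N)) (t : Fin M → Fin 2),
      IsRegular G Δ ∧ M < N ∧ Function.Surjective t ∧
      ∃ (ℓ : ℕ) (q : ℕ → Fin M → Fin N), 1 ≤ ℓ ∧ Function.Injective (q 0) ∧ q ℓ = q 0 ∧
        ∀ i < ℓ, ImprovingJump (costOne G t τ) (q i) (q (i + 1)) := by
  have hτ : 0 < τ := lt_trans (by positivity) hτ1
  obtain ⟨N, G', φ, hinj, hφ, hreg⟩ := exists_regular (core (Fin (Δ - 2))) Δ (core_deg Δ hΔ)
  let e : Fin (Fintype.card (Fin 3 ⊕ Fin (Δ - 2))) ≃ Fin 3 ⊕ Fin (Δ - 2) :=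
    (Fintype.equivFin _).symm
  refine ⟨N, _, G', ctype ∘ e, hreg, ?_, ?_, 12,
    fun i => φ ∘ (Sum.map (tab i) id) ∘ e, by norm_num, ?_, rfl, ?_⟩
  · have := Fintype.card_le_of_injective φ hinj
    simp at this ⊢
    omega
  · refine Function.Surjective.comp ?_ e.surjective
    intro T
    fin_cases T
    · exact ⟨.inl 0, rfl⟩
    · exact ⟨.inr ⟨0, by omega⟩, rfl⟩
  · refine hinj.comp (Function.Injective.comp ?_ e.injective)
    refine Function.Injective.sumMap ?_ Function.injective_id
    decide
  · intro i hi
    obtain ⟨h1, h2, h3⟩ := core_step Δ hΔ τ hτ1 i hi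
    refine ⟨e.symm (.inl (who i)), φ (.inl (tab (i + 1) (who i))), ?_, ?_, ?_⟩
    · intro b hb
      exact h1 _ (hinj hb)
    · funext b
      simp only [Function.comp_apply]
      rw [h2]
      by_cases hb : b = e.symm (.inl (who i))
      · subst hb; simp
      · have hb' : e b ≠ .inl (who i) := by
          intro h
          exact hb (by rw [← h, Equiv.symm_apply_apply])
        rw [upd_ne _ _ _ _ hb', upd_ne _ _ _ _ hb]
        rfl
    · rw [cost_transport _ _ φ hφ e _ _ hτ, cost_transport _ _ φ hφ e _ _ hτ,
        Equiv.apply_symm_apply]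
      exact h3

end Schelling
end
end

section
/- For every intolerance parameter τ ∈ (0,1), there exist a finite simple graph G = (V,E), a set A of agents with |A| < |V| partitioned into three types, and an injective placement p₀ : A → V such that no finite sequence of improving jumps of the one-versus-one jump Schelling game (1-1-JSG) with parameter τ starting from p₀ ends in a jump-stable placement; in particular, the 1-1-JSG is not weakly acyclic on arbitrary networks for any τ ∈ (0,1). -/
open Finset
open scoped Classical

noncomputable section

namespace Schelling

variable {V A : Type*} [Fintype V] [Fintype A] {k : ℕ}

def Erel (u v : ℕ) : Prop :=
  (u = 0 ∧ v = 1) ∨ (u = 2 ∧ v = 3) ∨ ((u = 1 ∨ u = 3) ∧ (v = 4 ∨ 6 ≤ v)) ∨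
    (6 ≤ u ∧ 6 ≤ v ∧ u ≠ v)

def GG (K : ℕ) : SimpleGraph (Fin (K + 6)) where
  Adj u v := Erel u v ∨ Erel v u
  symm := ⟨fun _ _ h => h.symm⟩
  loopless := ⟨fun u h => by unfold Erel at h; omega⟩

theorem GG_adj (K : ℕ) (u v : Fin (K + 6)) :
    (GG K).Adj u v ↔ Erel u v ∨ Erel v u := Iff.rfl

def tt (K : ℕ) (a : Fin (K + 5)) : Fin 3 :=
  if (a : ℕ) < 4 then 0 else if (a : ℕ) = 4 then 1 else 2

theorem tt0 {K : ℕ} {a : Fin (K + 5)} : tt K a = 0 ↔ (a : ℕ) < 4 := by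
  unfold tt; split_ifs <;> simp_all
theorem tt1 {K : ℕ} {a : Fin (K + 5)} : tt K a = 1 ↔ (a : ℕ) = 4 := by
  unfold tt; split_ifs <;> simp_all; omega
theorem tt2 {K : ℕ} {a : Fin (K + 5)} : tt K a = 2 ↔ 5 ≤ (a : ℕ) := by
  unfold tt; split_ifs <;> simp_all <;> omega

def Inv (K : ℕ) (p : Fin (K + 5) → Fin (K + 6)) : Prop :=
  Function.Injective p ∧ (∀ a : Fin (K + 5), (a : ℕ) < 3 → (p a : ℕ) < 4) ∧
    ∀ a : Fin (K + 5), 3 ≤ (a : ℕ) → (p a : ℕ) = a + 1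

section gen
variable (G : SimpleGraph V) (t : A → Fin k) (τ : ℝ) (p : A → V) (a : A)

theorem cost_nonneg (h : 0 < τ) : 0 ≤ costOne G t τ p a := by
  unfold costOne; split_ifs
  · exact h.le
  · exact le_max_left _ _

theorem jump_spec {c : (A → V) → A → ℝ} {p q : A → V} {a : A} {v : V}
    (h : JumpMove c p q a v) : q a = v ∧ ∀ b, b ≠ a → q b = p b := by
  obtain ⟨_, rfl, _⟩ := h
  exact ⟨Function.update_self _ _ _, fun b hb => Function.update_of_ne hb _ _⟩

theorem jump_mk {c : (A → V) → A → ℝ} {p : A → V} (a : A) (v : V) (hv : ∀ b, p b ≠ v)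
    (h : ∀ q : A → V, q a = v → (∀ b, b ≠ a → q b = p b) → c q a < c p a) :
    ∃ q, ImprovingJump c p q :=
  ⟨Function.update p a v, a, v, hv, rfl,
    h _ (Function.update_self _ _ _) (fun _ hb => Function.update_of_ne hb _ _)⟩

theorem nbrs_ne {b : A} (h : G.Adj (p a) (p b)) : nbrs G p a ≠ ∅ := by
  apply Finset.Nonempty.ne_empty
  exact ⟨b, by simp [nbrs, h]⟩

theorem cost_lt (hτ : 0 < τ) {b : A} (h : G.Adj (p a) (p b)) (hb : t b = t a) :
    costOne G t τ p a < τ := by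
  unfold costOne
  rw [if_neg (nbrs_ne G p a h)]
  have : 0 < posCount G t p a := Finset.card_pos.2 ⟨b, by simp [h, hb]⟩
  have : (0 : ℝ) < posCount G t p a := by exact_mod_cast this
  apply max_lt hτ
  have : 0 < (posCount G t p a : ℝ) / ((posCount G t p a : ℝ) + (negCountOne G t p a : ℝ)) := by
    positivity
  linarith

theorem cost_tau (hτ : 0 < τ) (h : ∀ b, G.Adj (p a) (p b) → t b ≠ t a) :
    costOne G t τ p a = τ := by
  unfold costOne
  have : posCount G t p a = 0 := by
    unfold posCount
    rw [Finset.card_eq_zero, Finset.filter_eq_empty_iff]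
    intro b _ hb
    exact h b hb.1 hb.2
  split_ifs
  · rfl
  · simp [this, hτ.le]

/-- content if pos, neg bounds -/
theorem cost_zero {x y : ℕ} (hτ : 0 < τ) (hτ1 : τ < 1) (hx : x ≤ posCount G t p a)
    (hx0 : 0 < x)
    (hy : ∀ T ≠ t a, (Finset.univ.filter fun b => G.Adj (p a) (p b) ∧ t b = T).card ≤ y)
    (hxy : τ * y ≤ (1 - τ) * x) : costOne G t τ p a = 0 := by
  unfold costOne
  have hp : 0 < posCount G t p a := lt_of_lt_of_le hx0 hx
  obtain ⟨b, hb⟩ := Finset.card_pos.1 hp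
  rw [if_neg (nbrs_ne G p a (b := b) (by simpa using (Finset.mem_filter.1 hb).2.1))]
  have hn : negCountOne G t p a ≤ y := by
    unfold negCountOne
    apply Finset.sup_le
    intro T hT
    exact hy T (Finset.mem_filter.1 hT).2
  have hp' : (0 : ℝ) < posCount G t p a := by exact_mod_cast hp
  have hx' : (x : ℝ) ≤ posCount G t p a := by exact_mod_cast hx
  have hn' : (negCountOne G t p a : ℝ) ≤ y := by exact_mod_cast hn
  apply max_eq_left
  rw [sub_nonpos, le_div_iff₀ (by positivity)]
  nlinarith

theorem cost_pos {x y : ℕ} (hτ : 0 < τ) (hτ1 : τ < 1) (hx : posCount G t p a ≤ x)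
    {T : Fin k} (hT : T ≠ t a)
    (hy : y ≤ (Finset.univ.filter fun b => G.Adj (p a) (p b) ∧ t b = T).card)
    (hxy : x < τ * (x + y)) : 0 < costOne G t τ p a := by
  unfold costOne
  split_ifs
  · exact hτ
  have hn : y ≤ negCountOne G t p a := by
    unfold negCountOne
    exact hy.trans (Finset.le_sup
      (f := fun T => (Finset.univ.filter fun b => G.Adj (p a) (p b) ∧ t b = T).card)
      (Finset.mem_filter.2 ⟨Finset.mem_univ T, hT⟩))
  have hx' : (posCount G t p a : ℝ) ≤ x := by exact_mod_cast hx
  have hn' : (y : ℝ) ≤ negCountOne G t p a := by exact_mod_cast hn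
  have h0 : (0 : ℝ) ≤ posCount G t p a := by positivity
  have hx0 : (0 : ℝ) ≤ x := by positivity
  have hy0 : (0 : ℝ) < y := by
    by_contra h
    nlinarith
  apply lt_max_of_lt_right
  rw [sub_pos, div_lt_iff₀ (by linarith)]
  nlinarith

end gen

theorem card_small {K : ℕ} (s : Finset (Fin (K + 5))) (m : ℕ) (h : ∀ b ∈ s, (b : ℕ) < m) :
    s.card ≤ m := by
  have := Finset.card_le_card_of_injOn (s := s) (t := Finset.range m) (fun b => (b : ℕ))
    (fun b hb => by simpa using h b hb) (fun a _ b _ h => Fin.ext h)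
  simpa using this

theorem card_big {K : ℕ} (s : Finset (Fin (K + 5))) (h : ∀ b : Fin (K + 5), 5 ≤ (b : ℕ) → b ∈ s) :
    K ≤ s.card := by
  have h1 := card_small (Finset.univ \ s) 5 (fun b hb => by
    by_contra h'
    exact (Finset.mem_sdiff.1 hb).2 (h b (by omega)))
  have h2 := Finset.card_sdiff_add_card_eq_card (Finset.subset_univ s)
  simp only [Finset.card_univ, Fintype.card_fin] at h2
  omega

theorem exists_at {K : ℕ} {p : Fin (K + 5) → Fin (K + 6)} (hI : Inv K p) :
    ∃ v : Fin (K + 6), (v : ℕ) < 4 ∧ (∀ b, p b ≠ v) ∧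
      ∀ w : Fin (K + 6), (w : ℕ) < 4 → w ≠ v → ∃ b : Fin (K + 5), (b : ℕ) < 3 ∧ p b = w := by
  obtain ⟨hinj, hm, hf⟩ := hI
  have d : ∀ i j : Fin (K + 5), (i : ℕ) ≠ j → (p i : ℕ) ≠ p j := fun i j h h' =>
    h (congrArg _ (hinj (Fin.ext h')))
  have d01 := d ⟨0, by omega⟩ ⟨1, by omega⟩ (by simp)
  have d02 := d ⟨0, by omega⟩ ⟨2, by omega⟩ (by simp)
  have d12 := d ⟨1, by omega⟩ ⟨2, by omega⟩ (by simp)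
  have m0 := hm ⟨0, by omega⟩ (by simp)
  have m1 := hm ⟨1, by omega⟩ (by simp)
  have m2 := hm ⟨2, by omega⟩ (by simp)
  have key : ∃ v : ℕ, v < 4 ∧ v ≠ p ⟨0, by omega⟩ ∧ v ≠ p ⟨1, by omega⟩ ∧ v ≠ p ⟨2, by omega⟩ := by
    by_contra! h
    have h0 := h 0
    have h1 := h 1
    have h2 := h 2
    have h3 := h 3
    omega
  obtain ⟨v, hv4, hv0, hv1, hv2⟩ := key
  refine ⟨⟨v, by omega⟩, hv4, ?_, ?_⟩
  · intro b hb
    have hb' : (p b : ℕ) = v := congrArg Fin.val hb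
    by_cases h3 : 3 ≤ (b : ℕ)
    · have := hf b h3; omega
    · have : b = (⟨0, by clear * -; omega⟩ : Fin (K + 5)) ∨ b = (⟨1, by clear * -; omega⟩ : Fin (K + 5)) ∨
          b = (⟨2, by clear * -; omega⟩ : Fin (K + 5)) := by
        simp only [Fin.ext_iff]; omega
      rcases this with h | h | h <;> rw [h] at hb' <;> omega
  · intro w hw hwv
    have hwv' : (w : ℕ) ≠ v := fun h => hwv (Fin.ext h)
    have : (w : ℕ) = p ⟨0, by omega⟩ ∨ (w : ℕ) = p ⟨1, by omega⟩ ∨ (w : ℕ) = p ⟨2, by omega⟩ := by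
      omega
    rcases this with h | h | h
    · exact ⟨⟨0, by omega⟩, by simp, Fin.ext h.symm⟩
    · exact ⟨⟨1, by omega⟩, by simp, Fin.ext h.symm⟩
    · exact ⟨⟨2, by omega⟩, by simp, Fin.ext h.symm⟩

theorem inv_step {K : ℕ} {τ : ℝ} (hτ0 : 0 < τ) (hτ1 : τ < 1) (hK : 2 ≤ K)
    (hK1 : τ * (5 : ℕ) ≤ (1 - τ) * ((K - 1 : ℕ) : ℝ))
    {p q : Fin (K + 5) → Fin (K + 6)} (hI : Inv K p)
    (h : ImprovingJump (costOne (GG K) (tt K) τ) p q) : Inv K q := by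
  obtain ⟨a, v, hj⟩ := h
  obtain ⟨hqa, hqb⟩ := jump_spec hj
  obtain ⟨hv, -, hc⟩ := hj
  have hI' := hI
  obtain ⟨hinj, hm, hf⟩ := hI
  have hv4 : (v : ℕ) < 4 := by
    by_contra h4
    refine hv ⟨v - 1, by omega⟩ (Fin.ext ?_)
    rw [hf _ (by simp; omega)]
    simp; omega
  by_cases ha : (a : ℕ) < 3
  · refine ⟨?_, ?_, ?_⟩
    · intro i j hij
      by_cases hi : i = a <;> by_cases hj : j = a
      · rw [hi, hj]
      · rw [hi, hqa, hqb j hj] at hij; exact absurd hij.symm (hv j)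
      · rw [hj, hqa, hqb i hi] at hij; exact absurd hij (hv i)
      · rw [hqb i hi, hqb j hj] at hij; exact hinj hij
    · intro b hb
      by_cases h : b = a
      · rw [h, hqa]; exact hv4
      · rw [hqb b h]; exact hm b hb
    · intro b hb
      rw [hqb b (by rintro rfl; omega)]; exact hf b hb
  · exfalso
    have hpa := hf a (by omega)
    have hnn := cost_nonneg (GG K) (tt K) τ q a hτ0
    rcases (by omega : (a : ℕ) = 3 ∨ (a : ℕ) = 4 ∨ 5 ≤ (a : ℕ)) with h3 | h3 | h3
    · have ht : tt K a = 0 := tt0.2 (by omega)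
      -- an occupied H node
      obtain ⟨w, hw4, hwv, hall⟩ := exists_at hI'
      have : ∃ b : Fin (K + 5), (b : ℕ) < 3 ∧ ((p b : ℕ) = 1 ∨ (p b : ℕ) = 3) := by
        by_cases hw1 : (w : ℕ) = 1
        · obtain ⟨b, hb, hb'⟩ := hall ⟨3, by omega⟩ (by simp) (by simp [Fin.ext_iff]; omega)
          exact ⟨b, hb, Or.inr (by rw [hb'])⟩
        · obtain ⟨b, hb, hb'⟩ := hall ⟨1, by omega⟩ (by simp) (by rw [Ne, Fin.ext_iff]; simp; omega)
          exact ⟨b, hb, Or.inl (by rw [hb'])⟩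
      obtain ⟨b, hb, hb'⟩ := this
      have : costOne (GG K) (tt K) τ p a = 0 := by
        apply cost_zero (x := 1) (y := 0) _ _ _ _ _ hτ0 hτ1 _ one_pos
        · intro T hT
          rw [Nat.le_zero, Finset.card_eq_zero, Finset.filter_eq_empty_iff]
          rintro c _ ⟨hc1, rfl⟩
          rw [GG_adj] at hc1
          unfold Erel at hc1
          apply hT
          rw [ht, tt0]
          by_contra hc4
          have := hf c (by omega)
          omega
        · simp; linarith
        · apply Finset.card_pos.2
          refine ⟨b, Finset.mem_filter.2 ⟨Finset.mem_univ _, ?_, ?_⟩⟩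
          · rw [GG_adj]; unfold Erel; omega
          · rw [ht, tt0]; omega
      linarith
    · have ht : tt K a = 1 := tt1.2 (by omega)
      have key : ∀ p', costOne (GG K) (tt K) τ p' a = τ := by
        intro p'
        apply cost_tau _ _ _ _ _ hτ0
        intro b hb hb'
        rw [ht, tt1] at hb'
        have : b = a := Fin.ext (by omega)
        subst this
        exact (GG K).irrefl hb
      rw [key, key] at hc
      exact lt_irrefl _ hc
    · have ht : tt K a = 2 := tt2.2 (by omega)
      have : costOne (GG K) (tt K) τ p a = 0 := by
        apply cost_zero (x := K - 1) (y := 5) _ _ _ _ _ hτ0 hτ1 _ (by omega) _ hK1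
        · have := card_big (insert a (Finset.univ.filter fun b =>
            (GG K).Adj (p a) (p b) ∧ tt K b = tt K a)) (fun b hb => by
              rw [Finset.mem_insert]
              by_cases hba : b = a
              · exact Or.inl hba
              · right
                refine Finset.mem_filter.2 ⟨Finset.mem_univ _, ?_, ?_⟩
                · have := hf b (by omega)
                  have : (b : ℕ) ≠ a := fun h => hba (Fin.ext h)
                  rw [GG_adj]; unfold Erel; omega
                · rw [ht, tt2]; exact hb)
          have h2 := Finset.card_insert_le a (Finset.univ.filter fun b =>
            (GG K).Adj (p a) (p b) ∧ tt K b = tt K a)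
          unfold posCount
          omega
        · intro T hT
          apply card_small
          intro b hb
          have hb := (Finset.mem_filter.1 hb).2.2
          by_contra h5
          apply hT
          rw [← hb, ht, tt2]; omega
      linarith

theorem inv_unstable {K : ℕ} {τ : ℝ} (hτ0 : 0 < τ) (hτ1 : τ < 1)
    (hK2 : (4 : ℕ) < τ * ((4 : ℕ) + (K : ℝ)))
    {p : Fin (K + 5) → Fin (K + 6)} (hI : Inv K p) :
    ∃ q, ImprovingJump (costOne (GG K) (tt K) τ) p q := by
  obtain ⟨v, hv4, hv, hall⟩ := exists_at hI
  obtain ⟨hinj, hm, hf⟩ := hI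
  by_cases hL : (v : ℕ) = 0 ∨ (v : ℕ) = 2
  · -- agent at the other H jumps to v
    obtain ⟨a, ha, hpa⟩ := hall ⟨3 - v, by omega⟩ (by simp; omega)
      (by rw [Ne, Fin.ext_iff]; simp; omega)
    obtain ⟨b, hb, hpb⟩ := hall ⟨v + 1, by omega⟩ (by simp; omega)
      (by rw [Ne, Fin.ext_iff]; simp)
    have hpa' : (p a : ℕ) = 3 - v := by rw [hpa]
    have hpb' : (p b : ℕ) = v + 1 := by rw [hpb]
    have hab : b ≠ a := by rintro rfl; omega
    have ht : tt K a = 0 := tt0.2 (by omega)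
    refine jump_mk a v hv fun q hqa hqb => ?_
    have h1 : costOne (GG K) (tt K) τ q a = 0 := by
      apply cost_zero (x := 1) (y := 0) _ _ _ _ _ hτ0 hτ1 _ one_pos
      · intro T hT
        rw [Nat.le_zero, Finset.card_eq_zero, Finset.filter_eq_empty_iff]
        rintro c _ ⟨hc1, rfl⟩
        apply hT
        rw [ht, tt0]
        by_contra hc4
        rw [hqa, hqb c (by rintro rfl; omega), GG_adj] at hc1
        unfold Erel at hc1
        have := hf c (by omega)
        omega
      · simp; linarith
      · apply Finset.card_pos.2
        refine ⟨b, Finset.mem_filter.2 ⟨Finset.mem_univ _, ?_, ?_⟩⟩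
        · rw [hqa, hqb b hab, GG_adj]; unfold Erel; omega
        · rw [ht, tt0]; omega
    rw [h1]
    apply cost_pos (x := 4) (y := K) (T := 2) _ _ _ _ _ hτ0 hτ1 _ _ _ hK2
    · apply card_small
      intro c hc
      have := (Finset.mem_filter.1 hc).2.2
      rw [ht, tt0] at this
      exact this
    · rw [ht]; decide
    · apply card_big
      intro c hc
      refine Finset.mem_filter.2 ⟨Finset.mem_univ _, ?_, tt2.2 hc⟩
      have := hf c (by omega)
      rw [GG_adj]; unfold Erel; omega
  · obtain ⟨a, ha, hpa⟩ := hall ⟨v - 1, by omega⟩ (by simp; omega)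
      (by rw [Ne, Fin.ext_iff]; simp; omega)
    have hpa' : (p a : ℕ) = v - 1 := by rw [hpa]
    have ht : tt K a = 0 := tt0.2 (by omega)
    refine jump_mk a v hv fun q hqa hqb => ?_
    rw [cost_tau (p := p) _ _ _ _ hτ0]
    · have h3 := hf ⟨3, by omega⟩ (by simp)
      apply cost_lt (b := ⟨3, by omega⟩) _ _ _ _ _ hτ0
      · rw [hqa,
          hqb _ (by rw [Ne, Fin.ext_iff]; simp; omega), GG_adj]
        unfold Erel; simp at h3; omega
      · rw [ht, tt0]; simp
    · intro b hb _
      have : (p b : ℕ) ≠ v := fun h => hv b (Fin.ext h)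
      rw [GG_adj] at hb
      unfold Erel at hb
      omega

/-- For every `τ ∈ (0,1)` there are a graph, three surjectively used agent types on
`|A| < |V|` agents and an injective placement `p₀` from which no finite sequence of
improving jumps of the `1`-`1`-JSG reaches a jump-stable placement, i.e., the
`1`-`1`-JSG is not weakly acyclic on arbitrary networks. -/
theorem statement11 (τ : ℝ) (hτ0 : 0 < τ) (hτ1 : τ < 1) :
    ∃ (N M : ℕ) (G : SimpleGraph (Fin N)) (t : Fin M → Fin 3) (p₀ : Fin M → Fin N),
      M < N ∧ Function.Surjective t ∧ Function.Injective p₀ ∧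
      ¬ ReachesStableJump (costOne G t τ) p₀ := by
  obtain ⟨K1, h1⟩ := exists_nat_gt (4 / τ)
  obtain ⟨K2, h2⟩ := exists_nat_gt (5 / (1 - τ))
  have hs : 0 < 1 - τ := by linarith
  rw [div_lt_iff₀ hτ0] at h1
  rw [div_lt_iff₀ hs] at h2
  set K := K1 + K2 + 2 with hKdef
  have hk : (K : ℝ) = K1 + K2 + 2 := by rw [hKdef]; push_cast; ring
  have hk' : ((K - 1 : ℕ) : ℝ) = K1 + K2 + 1 := by
    rw [hKdef, show K1 + K2 + 2 - 1 = K1 + K2 + 1 by omega]; push_cast; ring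
  have n1 : (0 : ℝ) ≤ K1 := by positivity
  have n2 : (0 : ℝ) ≤ K2 := by positivity
  have hK1 : τ * (5 : ℕ) ≤ (1 - τ) * ((K - 1 : ℕ) : ℝ) := by
    rw [hk']; push_cast; nlinarith
  have hK2 : (4 : ℕ) < τ * ((4 : ℕ) + (K : ℝ)) := by
    rw [hk]; push_cast; nlinarith
  have hK : 2 ≤ K := by omega
  let p₀ : Fin (K + 5) → Fin (K + 6) := fun a =>
    if h : (a : ℕ) < 3 then ⟨a, by omega⟩ else ⟨a + 1, by omega⟩
  have hp : ∀ a, (p₀ a : ℕ) = if (a : ℕ) < 3 then (a : ℕ) else a + 1 := by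
    intro a; simp only [p₀]; split_ifs <;> rfl
  have hinj : Function.Injective p₀ := by
    intro a b hab
    have := congrArg Fin.val hab
    rw [hp, hp] at this
    apply Fin.ext
    split_ifs at this <;> omega
  have hI0 : Inv K p₀ := by
    refine ⟨hinj, ?_, ?_⟩
    · intro a ha; rw [hp, if_pos ha]; omega
    · intro a ha; rw [hp, if_neg (by omega)]
  refine ⟨K + 6, K + 5, GG K, tt K, p₀, by omega, ?_, hinj, ?_⟩
  · intro T
    fin_cases T
    · exact ⟨⟨0, by omega⟩, tt0.2 (by simp)⟩
    · exact ⟨⟨4, by omega⟩, tt1.2 (by simp)⟩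
    · exact ⟨⟨5, by omega⟩, tt2.2 (by simp)⟩
  · rintro ⟨n, q, hq0, hstep, hst⟩
    have : ∀ i ≤ n, Inv K (q i) := by
      intro i
      induction i with
      | zero => intro _; rw [hq0]; exact hI0
      | succ i ih =>
        intro hi
        exact inv_step hτ0 hτ1 hK hK1 (ih (by omega)) (hstep i (by omega))
    obtain ⟨q', hq'⟩ := inv_unstable hτ0 hτ1 hK2 (this n le_rfl)
    exact hst q' hq'

end Schelling
end
end

section
/- Let G = (V,E) be a finite simple graph with an even number of nodes and minimum degree at least 1, let A be a set of agents with |A| = |V| partitioned into two types T₁, T₂ each of size |V|/2, and let τ = 1/2. Then there exists a bijective placement p : A → V under which every agent is content (i.e., the placement cost is 0) if and only if G admits a balanced satisfactory partition, i.e., a partition of V into two disjoint sets V₁, V₂ with |V₁| = |V₂| such that every node v ∈ V_i (for i ∈ {1,2}) has at least deg_G(v)/2 of its neighbors inside V_i. -/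
open Finset
open scoped Classical

noncomputable section

namespace Schelling

variable {V A : Type*} [Fintype V] [Fintype A] {k : ℕ}

/-- The degree of a node `v` in `G`. -/
def degree (G : SimpleGraph V) (v : V) : ℕ :=
  (Finset.univ.filter fun u => G.Adj v u).card

theorem aux_pos {V A : Type*} [Fintype V] [Fintype A] (G : SimpleGraph V) (t : A → Fin 2)
    (p : A → V) (hp : Function.Bijective p) (a : A) (W : Finset V)
    (hW : ∀ b, p b ∈ W ↔ t b = t a) :
    posCount G t p a = (W.filter fun u => G.Adj (p a) u).card := by
  unfold posCount
  rw [← Finset.card_image_of_injective _ hp.1]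
  congr 1
  ext v
  obtain ⟨b, rfl⟩ := hp.2 v
  simp only [Finset.mem_image, Finset.mem_filter, Finset.mem_univ, true_and, hW]
  constructor
  · rintro ⟨c, ⟨h1, h2⟩, h3⟩
    obtain rfl := hp.1 h3
    exact ⟨h2, h1⟩
  · rintro ⟨h1, h2⟩
    exact ⟨b, ⟨h2, h1⟩, rfl⟩

theorem aux_nbrs {V A : Type*} [Fintype V] [Fintype A] (G : SimpleGraph V)
    (p : A → V) (hp : Function.Bijective p) (a : A) :
    (nbrs G p a).card = degree G (p a) := by
  unfold nbrs degree
  rw [← Finset.card_image_of_injective _ hp.1]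
  congr 1
  ext v
  obtain ⟨b, rfl⟩ := hp.2 v
  simp only [Finset.mem_image, Finset.mem_filter, Finset.mem_univ, true_and]
  constructor
  · rintro ⟨c, h1, h3⟩
    obtain rfl := hp.1 h3
    exact h1
  · intro h2
    exact ⟨b, h2, rfl⟩

theorem aux_sum {V A : Type*} [Fintype V] [Fintype A] (G : SimpleGraph V) (t : A → Fin 2)
    (p : A → V) (a : A) :
    posCount G t p a + negCountAll G t p a = (nbrs G p a).card := by
  unfold nbrs posCount negCountAll
  rw [← Finset.card_filter_add_card_filter_not (s := univ.filter fun b => G.Adj (p a) (p b))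
    (fun b => t b = t a), Finset.filter_filter, Finset.filter_filter]

theorem aux_cost {V A : Type*} [Fintype V] [Fintype A] (G : SimpleGraph V)
    (hmin : ∀ v, 0 < degree G v) (t : A → Fin 2)
    (p : A → V) (hp : Function.Bijective p) (a : A) :
    costAll G t (1 / 2 : ℝ) p a = 0 ↔ degree G (p a) ≤ 2 * posCount G t p a := by
  have hn := aux_nbrs G p hp a
  have hs := aux_sum G t p a
  have hd := hmin (p a)
  have hne : nbrs G p a ≠ ∅ := by
    intro h
    rw [h, Finset.card_empty] at hn
    omega
  unfold costAll
  rw [if_neg hne, max_eq_left_iff, ← Nat.cast_add, hs, hn, sub_nonpos,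
    div_le_div_iff₀ (by norm_num) (by exact_mod_cast hd), one_mul, mul_comm]
  exact_mod_cast Iff.rfl

theorem aux_place {V A : Type*} [Fintype V] [Fintype A] (G : SimpleGraph V)
    (hmin : ∀ v, 0 < degree G v) (t : A → Fin 2)
    (p : A → V) (hp : Function.Bijective p) :
    placementCost G t (1 / 2 : ℝ) p = 0 ↔ ∀ a, degree G (p a) ≤ 2 * posCount G t p a := by
  unfold placementCost
  rw [Finset.card_eq_zero, Finset.filter_eq_empty_iff]
  simp only [Finset.mem_univ, true_implies, not_not, aux_cost G hmin t p hp]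

/-- For a graph with an even number of nodes and minimum degree at least `1`, two agent
types each of size `|V|/2` on `|A| = |V|` agents and `τ = 1/2`: a bijective placement in
which every agent is content exists iff `G` admits a balanced satisfactory partition. -/
theorem statement12 {V A : Type*} [Fintype V] [Fintype A]
    (G : SimpleGraph V) (heven : Even (Fintype.card V))
    (hmin : ∀ v, 0 < degree G v)
    (t : A → Fin 2) (hcard : Fintype.card A = Fintype.card V)
    (h0 : (Finset.univ.filter fun a => t a = 0).card = Fintype.card V / 2)
    (h1 : (Finset.univ.filter fun a => t a = 1).card = Fintype.card V / 2) :
    (∃ p : A → V, Function.Bijective p ∧ placementCost G t (1 / 2 : ℝ) p = 0) ↔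
    (∃ V₁ V₂ : Finset V, V₁ ∪ V₂ = Finset.univ ∧ Disjoint V₁ V₂ ∧ V₁.card = V₂.card ∧
      (∀ v ∈ V₁, degree G v ≤ 2 * (V₁.filter fun u => G.Adj v u).card) ∧
      (∀ v ∈ V₂, degree G v ≤ 2 * (V₂.filter fun u => G.Adj v u).card)) := by
  have fin2 : ∀ x : Fin 2, x = 0 ∨ x = 1 := by decide
  constructor
  · rintro ⟨p, hp, hc⟩
    rw [aux_place G hmin t p hp] at hc
    have key : ∀ i b, p b ∈ (univ.filter fun a => t a = i).image p ↔ t b = i := by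
      intro i b
      simp only [Finset.mem_image, Finset.mem_filter, Finset.mem_univ, true_and]
      constructor
      · rintro ⟨c, h, h3⟩
        obtain rfl := hp.1 h3
        exact h
      · intro h
        exact ⟨b, h, rfl⟩
    have main : ∀ i, ∀ v ∈ (univ.filter fun a => t a = i).image p, degree G v ≤
        2 * (((univ.filter fun a => t a = i).image p).filter fun u => G.Adj v u).card := by
      intro i v hv
      obtain ⟨a, rfl⟩ := hp.2 v
      have ha := (key i a).1 hv
      subst ha
      rw [← aux_pos G t p hp a _ (key (t a))]
      exact hc a
    refine ⟨(univ.filter fun a => t a = 0).image p, (univ.filter fun a => t a = 1).image p,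
      ?_, ?_, ?_, main 0, main 1⟩
    · ext v
      obtain ⟨a, rfl⟩ := hp.2 v
      rw [Finset.mem_union, key, key]
      simpa using fin2 (t a)
    · rw [Finset.disjoint_left]
      intro v
      obtain ⟨a, rfl⟩ := hp.2 v
      rw [key, key]
      intro h h'
      rw [h] at h'
      exact absurd h' (by decide)
    · rw [Finset.card_image_of_injective _ hp.1, Finset.card_image_of_injective _ hp.1, h0, h1]
  · rintro ⟨V₁, V₂, hu, hd, hcd, H1, H2⟩
    have htot : V₁.card + V₂.card = Fintype.card V := by
      rw [← Finset.card_union_of_disjoint hd, hu, Finset.card_univ]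
    have hV2 : ∀ v, v ∈ V₂ ↔ v ∉ V₁ := by
      intro v
      have h : v ∈ V₁ ∪ V₂ := by rw [hu]; exact Finset.mem_univ v
      have h' : v ∈ V₁ → v ∉ V₂ := fun h => Finset.disjoint_left.1 hd h
      rw [Finset.mem_union] at h
      tauto
    have e1 : Fintype.card {a // t a = 0} = Fintype.card {v // v ∈ V₁} := by
      rw [Fintype.card_subtype, h0, Fintype.card_coe]
      omega
    have e2 : Fintype.card {a // ¬ t a = 0} = Fintype.card {v // ¬ v ∈ V₁} := by
      rw [Fintype.card_subtype_compl, Fintype.card_subtype_compl, hcard, e1]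
    let E : A ≃ V := (Equiv.sumCompl fun a => t a = 0).symm.trans
      ((Equiv.sumCongr (Fintype.equivOfCardEq e1) (Fintype.equivOfCardEq e2)).trans
        (Equiv.sumCompl fun v => v ∈ V₁))
    have hE : ∀ a, E a ∈ V₁ ↔ t a = 0 := by
      intro a
      by_cases h : t a = 0
      · have hs := Equiv.sumCompl_symm_apply_of_pos (p := fun a => t a = 0) (a := a) h
        simp only [E, Equiv.trans_apply, h, iff_true]
        rw [hs]
        exact (Fintype.equivOfCardEq e1 ⟨a, h⟩).2
      · have hs := Equiv.sumCompl_symm_apply_of_neg (p := fun a => t a = 0) (a := a) h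
        simp only [E, Equiv.trans_apply, h, iff_false]
        rw [hs]
        exact (Fintype.equivOfCardEq e2 ⟨a, h⟩).2
    refine ⟨E, E.bijective, ?_⟩
    rw [aux_place G hmin t E E.bijective]
    intro a
    rcases fin2 (t a) with h | h
    · rw [aux_pos G t E E.bijective a V₁ (fun b => by rw [hE, h])]
      exact H1 _ ((hE a).2 h)
    · have hE2 : ∀ b, E b ∈ V₂ ↔ t b = 1 := by
        intro b
        rw [hV2, hE]
        rcases fin2 (t b) with h | h <;> rw [h] <;> decide
      rw [aux_pos G t E E.bijective a V₂ (fun b => by rw [hE2, h])]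
      exact H2 _ ((hE2 a).2 h)

end Schelling
end
end

section
/- Let G be a finite simple 2-regular graph, i.e., a disjoint union of m cycles of lengths r₁, …, r_m (each r_i ≥ 3), let n = r₁ + ⋯ + r_m, let A be a set of n agents partitioned into two types of sizes n₁ ≥ 1 and n₂ ≥ 1 with n₁ + n₂ = n, and let τ ∈ (1/2, 1). Then there exists a bijective placement p : A → V(G) with placement cost 0 (all agents content) if and only if there is a subset S ⊆ {1, …, m} with ∑_{i∈S} r_i = n₁. -/
open Finset
open scoped Classical

noncomputable section

namespace Schelling

variable {V A : Type*} [Fintype V] [Fintype A] {k : ℕ}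

lemma count_bij (G : SimpleGraph V) (hreg : IsRegular G 2) (p : A → V)
    (hp : Function.Bijective p) (a : A) : (nbrs G p a).card = 2 := by
  rw [← hreg (p a)]
  unfold nbrs
  refine Finset.card_bij (fun b _ => p b) ?_ ?_ ?_
  · intro b hb; simpa using hb
  · intro b _ c _ h; exact hp.1 h
  · intro v hv
    obtain ⟨b, rfl⟩ := hp.2 v
    exact ⟨b, by simpa using hv, rfl⟩

lemma count_add (G : SimpleGraph V) (t : A → Fin k) (p : A → V) (a : A) :
    posCount G t p a + negCountAll G t p a = (nbrs G p a).card := by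
  unfold posCount negCountAll nbrs
  rw [← Finset.card_filter_add_card_filter_not (s := Finset.univ.filter fun b => G.Adj (p a) (p b))
    (fun b => t b = t a), Finset.filter_filter, Finset.filter_filter]

lemma cost_zero_iff (G : SimpleGraph V) (hreg : IsRegular G 2) (t : A → Fin k) (p : A → V)
    (hp : Function.Bijective p) (τ : ℝ) (hτ : 1 / 2 < τ) (hτ1 : τ < 1) (a : A) :
    costAll G t τ p a = 0 ↔ ∀ b, G.Adj (p a) (p b) → t b = t a := by
  have h2 := count_bij G hreg p hp a
  have hadd := count_add G t p a
  rw [h2] at hadd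
  have hne : nbrs G p a ≠ ∅ := by
    intro h; rw [h] at h2; simp at h2
  have hneg : negCountAll G t p a = 0 ↔ ∀ b, G.Adj (p a) (p b) → t b = t a := by
    unfold negCountAll
    rw [Finset.card_eq_zero, Finset.filter_eq_empty_iff]
    simp
  rw [← hneg]
  unfold costAll
  rw [if_neg hne]
  have hc : (posCount G t p a : ℝ) + (negCountAll G t p a : ℝ) = 2 := by exact_mod_cast hadd
  rw [hc, max_eq_left_iff]
  constructor
  · intro h
    by_contra hn
    have : (1 : ℝ) ≤ negCountAll G t p a := by exact_mod_cast Nat.one_le_iff_ne_zero.mpr hn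
    linarith
  · intro h
    rw [h] at hc
    push_cast at hc
    linarith

lemma placementCost_zero_iff (G : SimpleGraph V) (hreg : IsRegular G 2) (t : A → Fin k)
    (p : A → V) (hp : Function.Bijective p) (τ : ℝ) (hτ : 1 / 2 < τ) (hτ1 : τ < 1) :
    placementCost G t τ p = 0 ↔ ∀ a b, G.Adj (p a) (p b) → t b = t a := by
  unfold placementCost
  rw [Finset.card_eq_zero, Finset.filter_eq_empty_iff]
  simp only [Finset.mem_univ, true_implies, not_not]
  exact forall_congr' fun a => cost_zero_iff G hreg t p hp τ hτ hτ1 a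

lemma sum_comp (G : SimpleGraph V) (m : ℕ) (r : Fin m → ℕ)
    (comp : G.ConnectedComponent ≃ Fin m)
    (hsize : ∀ i,
      (Finset.univ.filter fun v => G.connectedComponentMk v = comp.symm i).card = r i)
    (S : Finset (Fin m)) :
    (Finset.univ.filter fun v => comp (G.connectedComponentMk v) ∈ S).card = ∑ i ∈ S, r i := by
  rw [Finset.card_eq_sum_card_fiberwise (f := fun v => comp (G.connectedComponentMk v)) (t := S)
    (by intro v hv; simpa using hv)]
  refine Finset.sum_congr rfl fun i hi => ?_
  rw [← hsize i, Finset.filter_filter]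
  congr 1
  ext v
  simp only [Finset.mem_filter, Finset.mem_univ, true_and, Equiv.eq_symm_apply]
  constructor
  · exact fun h => h.2
  · intro h; exact ⟨h ▸ hi, h⟩

/-- On a `2`-regular graph that is a disjoint union of `m` cycles of lengths
`r 0, …, r (m-1)` (each at least `3`), with two agent types of sizes `n₁, n₂ ≥ 1`,
`n₁ + n₂ = n = |V|` agents and `τ ∈ (1/2, 1)`: a bijective placement with placement cost
`0` exists iff some subset of the cycle lengths sums to `n₁`. -/
theorem statement13 {V A : Type*} [Fintype V] [Fintype A]
    (G : SimpleGraph V) (hreg : IsRegular G 2)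
    (m : ℕ) (r : Fin m → ℕ) (hr : ∀ i, 3 ≤ r i)
    (comp : G.ConnectedComponent ≃ Fin m)
    (hsize : ∀ i,
      (Finset.univ.filter fun v => G.connectedComponentMk v = comp.symm i).card = r i)
    (n n₁ n₂ : ℕ) (hn : n = ∑ i, r i) (hV : Fintype.card V = n)
    (hA : Fintype.card A = n)
    (t : A → Fin 2)
    (h1 : (Finset.univ.filter fun a => t a = 0).card = n₁)
    (h2 : (Finset.univ.filter fun a => t a = 1).card = n₂)
    (hn1 : 1 ≤ n₁) (hn2 : 1 ≤ n₂) (hsum : n₁ + n₂ = n)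
    (τ : ℝ) (hτ : 1 / 2 < τ) (hτ1 : τ < 1) :
    (∃ p : A → V, Function.Bijective p ∧ placementCost G t τ p = 0) ↔
    (∃ S : Finset (Fin m), ∑ i ∈ S, r i = n₁) := by
  constructor
  · rintro ⟨p, hp, hc⟩
    rw [placementCost_zero_iff G hreg t p hp τ hτ hτ1] at hc
    obtain ⟨e, rfl⟩ : ∃ e : A ≃ V, ⇑e = p := ⟨Equiv.ofBijective p hp, rfl⟩
    have hadj : ∀ u v, G.Adj u v → t (e.symm u) = t (e.symm v) := by
      intro u v h
      have := hc (e.symm u) (e.symm v) (by simpa using h)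
      exact this.symm
    have hreach : ∀ u v, G.Reachable u v → t (e.symm u) = t (e.symm v) := by
      rintro u v ⟨w⟩
      induction w with
      | nil => rfl
      | cons h _ ih => exact (hadj _ _ h).trans ih
    refine ⟨Finset.univ.filter fun i => ∀ v, comp (G.connectedComponentMk v) = i →
      t (e.symm v) = 0, ?_⟩
    rw [← sum_comp G m r comp hsize, ← h1]
    symm
    refine Finset.card_bij (fun a _ => e a) ?_ ?_ ?_
    · intro a ha
      simp only [Finset.mem_filter, Finset.mem_univ, true_and] at ha ⊢
      intro v hv
      have := hreach _ _ (SimpleGraph.ConnectedComponent.exact (comp.injective hv))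
      rw [this]; simpa using ha
    · intro a _ b _ h; exact e.injective h
    · intro v hv
      simp only [Finset.mem_filter, Finset.mem_univ, true_and] at hv
      exact ⟨e.symm v, by simpa using hv v rfl, by simp⟩
  · rintro ⟨S, hS⟩
    let g : V → Fin 2 := fun v => if comp (G.connectedComponentMk v) ∈ S then 0 else 1
    have hg0 : (Finset.univ.filter fun v => g v = 0).card = n₁ := by
      rw [← hS, ← sum_comp G m r comp hsize]
      congr 1
      ext v
      simp [g]
    have hg1 : (Finset.univ.filter fun v => g v = 1).card = n₂ := by
      have h := Finset.card_filter_add_card_filter_not (s := (Finset.univ : Finset V))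
        (fun v => g v = 0)
      have h' : (Finset.univ.filter fun v => ¬ g v = 0) =
          Finset.univ.filter fun v => g v = 1 := by
        ext v
        simp [g]
      rw [h', hg0, Finset.card_univ] at h
      omega
    have hcard : ∀ c : Fin 2, Fintype.card {a // t a = c} = Fintype.card {v // g v = c} := by
      intro c
      rw [Fintype.card_subtype, Fintype.card_subtype]
      fin_cases c
      · exact h1.trans hg0.symm
      · exact h2.trans hg1.symm
    let e : A ≃ V := Equiv.ofFiberEquiv fun c => Fintype.equivOfCardEq (hcard c)
    have he : ∀ a, g (e a) = t a := fun a => Equiv.ofFiberEquiv_map _ a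
    refine ⟨e, e.bijective, ?_⟩
    rw [placementCost_zero_iff G hreg t e e.bijective τ hτ hτ1]
    intro a b hab
    rw [← he a, ← he b]
    simp only [g]
    rw [SimpleGraph.ConnectedComponent.sound hab.reachable]

end Schelling
end
end

section
/- Let G be a finite simple 2-regular graph that is a disjoint union of m cycles of lengths r₁, …, r_m (each r_i ≥ 3), let n = r₁ + ⋯ + r_m, let A be a set of n agents partitioned into two types of sizes n₁ ≥ 1 and n₂ ≥ 1 with n₁ + n₂ = n, and let τ ∈ (1/2, 1). If no subset S ⊆ {1, …, m} satisfies ∑_{i∈S} r_i = n₁, then the minimum placement cost over all bijective placements p : A → V(G) is at least 3 and at most 4; moreover, if some subset S ⊆ {1, …, m} satisfies ∑_{i∈S} r_i = n₁ + 1, then this minimum equals 3. -/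
open Finset
open scoped Classical

noncomputable section

namespace Schelling

variable {V A : Type*} [Fintype V] [Fintype A] {k : ℕ}

/-- Vertices with a neighbour on the other side of `X`. -/
def bd (G : SimpleGraph V) (X : Finset V) : Finset V :=
  Finset.univ.filter fun v => ∃ w, G.Adj v w ∧ ¬ (w ∈ X ↔ v ∈ X)

/-- Cut pairs. -/
def cutP (G : SimpleGraph V) (X : Finset V) : Finset (V × V) :=
  Finset.univ.filter fun e => G.Adj e.1 e.2 ∧ e.1 ∈ X ∧ e.2 ∉ X

lemma bd_card_le (G : SimpleGraph V) (X : Finset V) : (bd G X).card ≤ 2 * (cutP G X).card := by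
  have hsub : bd G X ⊆ (cutP G X).image Prod.fst ∪ (cutP G X).image Prod.snd := by
    intro v hv
    simp only [bd, mem_filter, mem_univ, true_and] at hv
    obtain ⟨w, hw, hx⟩ := hv
    by_cases hvX : v ∈ X
    · apply mem_union_left
      refine mem_image.2 ⟨(v, w), ?_, rfl⟩
      simp only [cutP, mem_filter, mem_univ, true_and]
      exact ⟨hw, hvX, by tauto⟩
    · apply mem_union_right
      refine mem_image.2 ⟨(w, v), ?_, rfl⟩
      simp only [cutP, mem_filter, mem_univ, true_and]
      exact ⟨hw.symm, by tauto, hvX⟩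
  have := card_le_card hsub
  have h2 := card_union_le ((cutP G X).image Prod.fst) ((cutP G X).image Prod.snd)
  have h3 := card_image_le (s := cutP G X) (f := Prod.fst)
  have h4 := card_image_le (s := cutP G X) (f := Prod.snd)
  omega

lemma cut_insert (G : SimpleGraph V) (hreg : IsRegular G 2) (X : Finset V) (v : V) (hv : v ∉ X) :
    (cutP G (insert v X)).card + 2 * (univ.filter fun x => G.Adj v x ∧ x ∈ X).card
      ≤ (cutP G X).card + 2 := by
  set a := univ.filter fun x => G.Adj v x ∧ x ∈ X with ha
  set b := univ.filter fun x => G.Adj v x ∧ x ∉ X with hb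
  have hab : a.card + b.card = 2 := by
    rw [← hreg v, ← card_filter_add_card_filter_not (s := univ.filter fun u => G.Adj v u)
      (fun x => x ∈ X), filter_filter, filter_filter]
  set a' := a.image (fun x => (x, v)) with ha'
  have hca : a'.card = a.card := card_image_of_injective _ (fun x y h => by simpa using h)
  have hsub : a' ⊆ cutP G X := by
    intro e he
    obtain ⟨x, hx, rfl⟩ := mem_image.1 he
    simp only [ha, mem_filter, mem_univ, true_and] at hx
    simp only [cutP, mem_filter, mem_univ, true_and]
    exact ⟨hx.1.symm, hx.2, hv⟩
  have h1 : cutP G (insert v X) ⊆ (cutP G X \ a') ∪ b.image (fun y => (v, y)) := by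
    rintro ⟨x, y⟩ he
    simp only [cutP, mem_filter, mem_univ, true_and, mem_insert, not_or] at he
    obtain ⟨h1, h2, h3, h4⟩ := he
    rcases h2 with rfl | h2
    · apply mem_union_right
      exact mem_image.2 ⟨y, by simp [hb, h1, h4], rfl⟩
    · apply mem_union_left
      simp only [cutP, mem_sdiff, mem_filter, mem_univ, true_and]
      refine ⟨⟨h1, h2, h4⟩, fun h => ?_⟩
      obtain ⟨z, _, hz⟩ := mem_image.1 h
      simp only [Prod.mk.injEq] at hz
      exact h3 hz.2.symm
  have h2 := card_le_card h1
  have h3 := card_union_le (cutP G X \ a') (b.image (fun y => (v, y)))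
  have h4 := card_image_le (s := b) (f := fun y => (v, y))
  have h5 := card_sdiff_add_card_eq_card hsub
  omega

lemma exists_cut (G : SimpleGraph V) (hreg : IsRegular G 2) (j : ℕ) (hj : j ≤ Fintype.card V) :
    ∃ X : Finset V, X.card = j ∧ (cutP G X).card ≤ 2 := by
  induction j with
  | zero => exact ⟨∅, by simp, by simp [cutP]⟩
  | succ j ih =>
    obtain ⟨X, hX, hc⟩ := ih (by omega)
    by_cases h0 : (cutP G X).card = 0
    · obtain ⟨v, hv⟩ : ∃ v, v ∉ X := by
        by_contra! h
        have : X = univ := eq_univ_iff_forall.2 h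
        rw [this, card_univ] at hX
        omega
      refine ⟨insert v X, by rw [card_insert_of_notMem hv, hX], ?_⟩
      have := cut_insert G hreg X v hv
      omega
    · obtain ⟨⟨x, v⟩, he⟩ := card_pos.1 (Nat.pos_of_ne_zero h0)
      simp only [cutP, mem_filter, mem_univ, true_and] at he
      refine ⟨insert v X, by rw [card_insert_of_notMem he.2.2, hX], ?_⟩
      have := cut_insert G hreg X v he.2.2
      have h1 : 0 < (univ.filter fun x => G.Adj v x ∧ x ∈ X).card :=
        card_pos.2 ⟨x, by simp [he.1.symm, he.2.1]⟩
      omega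

lemma cost_ne_iff (G : SimpleGraph V) (hreg : IsRegular G 2) (t : A → Fin k) (τ : ℝ)
    (hτ : 1 / 2 < τ) (hτ1 : τ < 1) (p : A → V) (hp : Function.Bijective p) (a : A) :
    costAll G t τ p a ≠ 0 ↔ ∃ b, G.Adj (p a) (p b) ∧ t b ≠ t a := by
  have hN : (nbrs G p a).card = 2 := by
    rw [← hreg (p a)]
    refine card_bij (fun b _ => p b) ?_ ?_ ?_
    · intro b hb; simpa [nbrs] using hb
    · intro b _ c _ h; exact hp.1 h
    · intro v hv
      obtain ⟨b, rfl⟩ := hp.2 v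
      exact ⟨b, by simpa [nbrs] using hv, rfl⟩
  have hsum : posCount G t p a + negCountAll G t p a = 2 := by
    rw [← hN, ← card_filter_add_card_filter_not (s := nbrs G p a) (fun b => t b = t a)]
    simp only [nbrs, filter_filter, posCount, negCountAll]
  have hne : nbrs G p a ≠ ∅ := by
    intro h; rw [h] at hN; simp at hN
  have hneg : (∃ b, G.Adj (p a) (p b) ∧ t b ≠ t a) ↔ 0 < negCountAll G t p a := by
    rw [negCountAll, card_pos]
    constructor
    · rintro ⟨b, hb⟩; exact ⟨b, by simpa using hb⟩
    · rintro ⟨b, hb⟩; exact ⟨b, by simpa using hb⟩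
  rw [hneg, costAll, if_neg hne]
  have hs : (posCount G t p a : ℝ) + (negCountAll G t p a : ℝ) = 2 := by exact_mod_cast hsum
  rw [hs]
  constructor
  · intro h
    by_contra h0
    have : negCountAll G t p a = 0 := by omega
    have h2 : posCount G t p a = 2 := by omega
    apply h
    rw [h2, max_eq_left]
    push_cast
    linarith
  · intro h
    have h2 : posCount G t p a ≤ 1 := by omega
    have h3 : (posCount G t p a : ℝ) ≤ 1 := by exact_mod_cast h2
    have : 0 < τ - (posCount G t p a : ℝ) / 2 := by linarith
    exact (lt_max_of_lt_right this).ne'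

lemma placementCost_eq (G : SimpleGraph V) (hreg : IsRegular G 2) (t : A → Fin 2) (τ : ℝ)
    (hτ : 1 / 2 < τ) (hτ1 : τ < 1) (p : A → V) (hp : Function.Bijective p) (X : Finset V)
    (hX : ∀ a, p a ∈ X ↔ t a = 0) :
    placementCost G t τ p = (bd G X).card := by
  have key : ∀ a b, t b ≠ t a ↔ ¬ (p b ∈ X ↔ p a ∈ X) := by
    intro a b
    rw [hX, hX]
    generalize t a = x
    generalize t b = y
    revert x y
    decide
  refine card_bij (fun b _ => p b) ?_ ?_ ?_
  · intro a ha
    simp only [mem_filter, mem_univ, true_and] at ha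
    obtain ⟨b, hb, hb2⟩ := (cost_ne_iff G hreg t τ hτ hτ1 p hp a).1 ha
    simp only [bd, mem_filter, mem_univ, true_and]
    exact ⟨p b, hb, (key a b).1 hb2⟩
  · intro b _ c _ h; exact hp.1 h
  · intro v hv
    obtain ⟨a, rfl⟩ := hp.2 v
    refine ⟨a, ?_, rfl⟩
    simp only [bd, mem_filter, mem_univ, true_and] at hv
    obtain ⟨w, hw, hw2⟩ := hv
    obtain ⟨b, rfl⟩ := hp.2 w
    simp only [mem_filter, mem_univ, true_and]
    exact (cost_ne_iff G hreg t τ hτ hτ1 p hp a).2 ⟨b, hw, (key a b).2 hw2⟩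

lemma exists_placement (t : A → Fin 2) (hc : Fintype.card A = Fintype.card V) (X : Finset V)
    (hX : (Finset.univ.filter fun a => t a = 0).card = X.card) :
    ∃ p : A → V, Function.Bijective p ∧ ∀ a, p a ∈ X ↔ t a = 0 := by
  have c1 : Fintype.card {a // t a = 0} = Fintype.card {v // v ∈ X} := by
    rw [Fintype.card_subtype, hX, Fintype.card_coe]
  have c2 : Fintype.card {a // ¬ t a = 0} = Fintype.card {v // ¬ v ∈ X} := by
    rw [Fintype.card_subtype_compl, Fintype.card_subtype_compl, c1, hc]
  let e1 := Fintype.equivOfCardEq c1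
  let e2 := Fintype.equivOfCardEq c2
  let e := ((Equiv.sumCompl (fun a => t a = 0)).symm.trans (Equiv.sumCongr e1 e2)).trans
    (Equiv.sumCompl (fun v => v ∈ X))
  refine ⟨e, e.bijective, fun a => ?_⟩
  by_cases h : t a = 0
  · have : e a = e1 ⟨a, h⟩ := by
      simp [e, Equiv.sumCompl_symm_apply_of_pos (p := fun a => t a = 0) h]
    rw [this]
    simp [h]
  · have : e a = e2 ⟨a, h⟩ := by
      simp [e, Equiv.sumCompl_symm_apply_of_neg (p := fun a => t a = 0) h]
    rw [this]
    simp only [h, iff_false]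
    exact (e2 ⟨a, h⟩).2

lemma bd_ge_three (G : SimpleGraph V) (hreg : IsRegular G 2) (X : Finset V)
    (hne : (bd G X).Nonempty) : 3 ≤ (bd G X).card := by
  obtain ⟨u, v, huv, hu, hv⟩ : ∃ u v, G.Adj u v ∧ u ∈ X ∧ v ∉ X := by
    obtain ⟨u, hu⟩ := hne
    simp only [bd, mem_filter, mem_univ, true_and] at hu
    obtain ⟨w, hw, h⟩ := hu
    by_cases hX : u ∈ X
    · exact ⟨u, w, hw, hX, by tauto⟩
    · exact ⟨w, u, hw.symm, by tauto, hX⟩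
  by_contra hlt
  have hsub : {u, v} ⊆ bd G X := by
    intro x hx
    simp only [mem_insert, mem_singleton] at hx
    simp only [bd, mem_filter, mem_univ, true_and]
    rcases hx with rfl | rfl
    · exact ⟨v, huv, by tauto⟩
    · exact ⟨u, huv.symm, by tauto⟩
  have heq : {u, v} = bd G X := eq_of_subset_of_card_le hsub (by
    rw [card_pair huv.ne]; omega)
  have hD : ∀ x y, G.Adj x y → x ∈ X → y ∉ X → x = u ∧ y = v := by
    intro x y hxy hx hy
    have h1 : x ∈ bd G X := by
      simp only [bd, mem_filter, mem_univ, true_and]; exact ⟨y, hxy, by tauto⟩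
    have h2 : y ∈ bd G X := by
      simp only [bd, mem_filter, mem_univ, true_and]; exact ⟨x, hxy.symm, by tauto⟩
    rw [← heq] at h1 h2
    simp only [mem_insert, mem_singleton] at h1 h2
    constructor
    · rcases h1 with h | h
      · exact h
      · subst h; exact absurd hx hv
    · rcases h2 with h | h
      · subst h; exact absurd hu hy
      · exact h
  let H : SimpleGraph {x // x ∈ X} := G.comap Subtype.val
  have hdeg : ∀ x : {x // x ∈ X}, H.degree x = (univ.filter fun y => G.Adj x.1 y ∧ y ∈ X).card := by
    intro x
    rw [← SimpleGraph.card_neighborFinset_eq_degree]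
    refine card_bij (fun y _ => y.1) ?_ ?_ ?_
    · intro y hy
      simp only [SimpleGraph.mem_neighborFinset, H, SimpleGraph.comap_adj] at hy
      simp [hy, y.2]
    · intro y _ z _ h; exact Subtype.ext h
    · intro y hy
      simp only [mem_filter, mem_univ, true_and] at hy
      exact ⟨⟨y, hy.2⟩, by simp [H, hy.1], rfl⟩
  have hsplit : ∀ x, (univ.filter fun y => G.Adj x y ∧ y ∈ X).card +
      (univ.filter fun y => G.Adj x y ∧ y ∉ X).card = 2 := by
    intro x
    rw [← hreg x, ← card_filter_add_card_filter_not (s := univ.filter fun u => G.Adj x u)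
      (fun x => x ∈ X), filter_filter, filter_filter]
  have hodd : (univ.filter fun x => Odd (H.degree x)) = {⟨u, hu⟩} := by
    ext x
    simp only [mem_filter, mem_univ, true_and, mem_singleton]
    have hs := hsplit x.1
    rw [← hdeg] at hs
    constructor
    · intro ho
      by_contra hxu
      have : (univ.filter fun y => G.Adj x.1 y ∧ y ∉ X) = ∅ := by
        apply filter_eq_empty_iff.2
        rintro y _ ⟨h1, h2⟩
        exact hxu (Subtype.ext (hD _ _ h1 x.2 h2).1)
      rw [this, card_empty] at hs
      have : H.degree x = 2 := by omega
      rw [this] at ho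
      exact absurd ho (by decide)
    · rintro rfl
      have : (univ.filter fun y => G.Adj u y ∧ y ∉ X) = {v} := by
        ext y
        simp only [mem_filter, mem_univ, true_and, mem_singleton]
        constructor
        · rintro ⟨h1, h2⟩; exact (hD _ _ h1 hu h2).2
        · rintro rfl; exact ⟨huv, hv⟩
      rw [this, card_singleton] at hs
      have : H.degree ⟨u, hu⟩ = 1 := by omega
      rw [this]
      decide
  have hev := H.even_card_odd_degree_vertices
  rw [hodd] at hev
  simp at hev

lemma card_union_comp (G : SimpleGraph V) {m : ℕ} (r : Fin m → ℕ)
    (comp : G.ConnectedComponent ≃ Fin m)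
    (hsize : ∀ i,
      (Finset.univ.filter fun v => G.connectedComponentMk v = comp.symm i).card = r i)
    (S : Finset (Fin m)) :
    (univ.filter fun v => comp (G.connectedComponentMk v) ∈ S).card = ∑ i ∈ S, r i := by
  rw [card_eq_sum_card_fiberwise (f := fun v => comp (G.connectedComponentMk v)) (t := S)
    (fun v hv => by simpa using hv)]
  refine sum_congr rfl fun i hi => ?_
  rw [← hsize i, filter_filter]
  congr 1
  ext v
  simp only [mem_filter, mem_univ, true_and, Equiv.eq_symm_apply]
  constructor
  · exact fun h => h.2
  · intro h; exact ⟨h ▸ hi, h⟩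

lemma closed_union (G : SimpleGraph V) {m : ℕ} (comp : G.ConnectedComponent ≃ Fin m)
    (X : Finset V) (h : bd G X = ∅) :
    ∃ S : Finset (Fin m), X = univ.filter fun v => comp (G.connectedComponentMk v) ∈ S := by
  have hadj : ∀ x y, G.Adj x y → (x ∈ X ↔ y ∈ X) := by
    intro x y hxy
    by_contra hc
    have : x ∈ bd G X := by
      simp only [bd, mem_filter, mem_univ, true_and]; exact ⟨y, hxy, by tauto⟩
    rw [h] at this
    simp at this
  have hreach : ∀ x y, G.Reachable x y → (x ∈ X ↔ y ∈ X) := by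
    rintro x y ⟨w⟩
    induction w with
    | nil => rfl
    | cons h _ ih => exact (hadj _ _ h).trans ih
  refine ⟨X.image fun v => comp (G.connectedComponentMk v), ?_⟩
  ext v
  simp only [mem_filter, mem_univ, true_and, mem_image, EmbeddingLike.apply_eq_iff_eq]
  constructor
  · intro hv; exact ⟨v, hv, rfl⟩
  · rintro ⟨w, hw, he⟩
    exact (hreach w v (SimpleGraph.ConnectedComponent.eq.1 he)).1 hw

/-- On a `2`-regular graph that is a disjoint union of `m` cycles of lengths
`r 0, …, r (m-1)` (each at least `3`), with two agent types of sizes `n₁, n₂ ≥ 1`,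
`n₁ + n₂ = n = |V|` agents and `τ ∈ (1/2, 1)`: if no subset of the cycle lengths sums to
`n₁`, then the minimum placement cost over bijective placements is at least `3` and at
most `4`; if moreover some subset sums to `n₁ + 1`, the minimum equals `3`. -/
theorem statement14 {V A : Type*} [Fintype V] [Fintype A]
    (G : SimpleGraph V) (hreg : IsRegular G 2)
    (m : ℕ) (r : Fin m → ℕ) (hr : ∀ i, 3 ≤ r i)
    (comp : G.ConnectedComponent ≃ Fin m)
    (hsize : ∀ i,
      (Finset.univ.filter fun v => G.connectedComponentMk v = comp.symm i).card = r i)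
    (n n₁ n₂ : ℕ) (hn : n = ∑ i, r i) (hV : Fintype.card V = n)
    (hA : Fintype.card A = n)
    (t : A → Fin 2)
    (h1 : (Finset.univ.filter fun a => t a = 0).card = n₁)
    (h2 : (Finset.univ.filter fun a => t a = 1).card = n₂)
    (hn1 : 1 ≤ n₁) (hn2 : 1 ≤ n₂) (hsum : n₁ + n₂ = n)
    (τ : ℝ) (hτ : 1 / 2 < τ) (hτ1 : τ < 1)
    (hno : ¬ ∃ S : Finset (Fin m), ∑ i ∈ S, r i = n₁) :
    (∀ p : A → V, Function.Bijective p → 3 ≤ placementCost G t τ p) ∧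
    (∃ p : A → V, Function.Bijective p ∧ placementCost G t τ p ≤ 4) ∧
    ((∃ S : Finset (Fin m), ∑ i ∈ S, r i = n₁ + 1) →
      ∃ p : A → V, Function.Bijective p ∧ placementCost G t τ p = 3) := by
  have lower : ∀ p : A → V, Function.Bijective p → 3 ≤ placementCost G t τ p := by
    intro p hp
    set X : Finset V := (univ.filter fun a => t a = 0).image p with hXdef
    have hX : ∀ a, p a ∈ X ↔ t a = 0 := by
      intro a
      simp [hXdef, hp.1.eq_iff]
    have hXc : X.card = n₁ := by rw [hXdef, card_image_of_injective _ hp.1, h1]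
    rw [placementCost_eq G hreg t τ hτ hτ1 p hp X hX]
    apply bd_ge_three G hreg
    rw [nonempty_iff_ne_empty]
    intro h
    obtain ⟨S, hS⟩ := closed_union G comp X h
    apply hno
    exact ⟨S, by rw [← card_union_comp G r comp hsize S, ← hS, hXc]⟩
  have hc : Fintype.card A = Fintype.card V := by rw [hA, hV]
  refine ⟨lower, ?_, ?_⟩
  · obtain ⟨X, hX, hcut⟩ := exists_cut G hreg n₁ (by omega)
    obtain ⟨p, hp, hpX⟩ := exists_placement t hc X (by rw [h1, hX])
    refine ⟨p, hp, ?_⟩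
    rw [placementCost_eq G hreg t τ hτ hτ1 p hp X hpX]
    have := bd_card_le G X
    omega
  · rintro ⟨S, hS⟩
    rw [← card_union_comp G r comp hsize S] at hS
    set Y := univ.filter fun v => comp (G.connectedComponentMk v) ∈ S with hY
    obtain ⟨v, hv⟩ : Y.Nonempty := card_pos.1 (by omega)
    obtain ⟨p, hp, hpX⟩ := exists_placement t hc (Y.erase v) (by
      rw [h1, card_erase_of_mem hv]; omega)
    refine ⟨p, hp, le_antisymm ?_ (lower p hp)⟩
    rw [placementCost_eq G hreg t τ hτ hτ1 p hp _ hpX]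
    have hsub : bd G (Y.erase v) ⊆ insert v (univ.filter fun u => G.Adj v u) := by
      intro x hx
      simp only [bd, mem_filter, mem_univ, true_and] at hx
      obtain ⟨w, hw, hh⟩ := hx
      simp only [mem_insert, mem_filter, mem_univ, true_and]
      by_contra! hcon
      apply hh
      have hwv : w ≠ v := by
        rintro rfl; exact hcon.2 hw.symm
      have he : G.connectedComponentMk w = G.connectedComponentMk x :=
        SimpleGraph.ConnectedComponent.eq.2 hw.symm.reachable
      simp [hY, hwv, hcon.1, he]
    have h3 := card_le_card hsub
    have h4 := card_insert_le v (univ.filter fun u => G.Adj v u)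
    rw [hreg v] at h4
    omega

end Schelling
end
end

section
/- For every intolerance parameter τ with 0.9 < τ < 1, there exist a finite simple graph G = (V,E) and a set A of agents with |A| = |V| partitioned into two types such that no bijective placement p : A → V of minimum placement cost is swap-stable; that is, in the swap Schelling game with two types there is a network on which every optimal placement admits an improving swap. -/
open Finset
open scoped Classical

noncomputable section

namespace Schelling

variable {V A : Type*} [Fintype V] [Fintype A] {k : ℕ}

/-- Complete bipartite graph with parts `{2,3}` and `{0,1,4}`. -/
def adjB (u v : Fin 5) : Bool := xor (u = 2 || u = 3) (v = 2 || v = 3)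

def GB : SimpleGraph (Fin 5) where
  Adj u v := adjB u v = true
  symm := ⟨by decide⟩
  loopless := ⟨by decide⟩

def tB (u : Fin 5) : Fin 2 := if u = 0 ∨ u = 1 then 1 else 0

def posB (c : Fin 5 → Fin 2) (v : Fin 5) : ℕ :=
  (Finset.univ.filter fun u => adjB v u = true ∧ c u = c v).card

def negB (c : Fin 5 → Fin 2) (v : Fin 5) : ℕ :=
  (Finset.univ.filter fun u => adjB v u = true ∧ c u ≠ c v).card

def costB (c : Fin 5 → Fin 2) : ℕ := (Finset.univ.filter fun v => negB c v ≠ 0).card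

lemma key : ∀ c : Fin 5 → Fin 2, (Finset.univ.filter fun v => c v = 1).card = 2 →
    costB c ≤ costB tB →
    ∃ u v, u ≠ v ∧
      posB c u * negB (c ∘ Equiv.swap u v) v < posB (c ∘ Equiv.swap u v) v * negB c u ∧
      posB c v * negB (c ∘ Equiv.swap u v) u < posB (c ∘ Equiv.swap u v) u * negB c v := by
  decide +kernel

lemma bound : ∀ c : Fin 5 → Fin 2, ∀ v, 0 < posB c v + negB c v ∧ posB c v + negB c v ≤ 3 := by
  decide +kernel

lemma card_tB : (Finset.univ.filter fun v => tB v = 1).card = 2 := by decide +kernel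

lemma card_comp (p : Fin 5 → Fin 5) (hp : Function.Bijective p) (P : Fin 5 → Prop)
    [DecidablePred P] [DecidablePred fun b => P (p b)] :
    (Finset.univ.filter fun b => P (p b)).card = (Finset.univ.filter P).card := by
  refine Finset.card_bij (fun b _ => p b) ?_ ?_ ?_
  · intro b hb; simpa using hb
  · intro a _ b _ h; exact hp.1 h
  · intro v hv
    obtain ⟨b, rfl⟩ := hp.2 v
    exact ⟨b, by simpa using hv, rfl⟩

lemma pos_eq (p : Fin 5 → Fin 5) (hp : Function.Bijective p) (c : Fin 5 → Fin 2)
    (hc : ∀ a, c (p a) = tB a) (a : Fin 5) : posCount GB tB p a = posB c (p a) := by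
  unfold posCount posB
  have := card_comp p hp (fun u => adjB (p a) u = true ∧ c u = c (p a))
  simp only [hc] at this
  simp only [hc]
  convert this using 2
  ext b
  rw [Finset.mem_filter, Finset.mem_filter]
  rfl

lemma neg_eq (p : Fin 5 → Fin 5) (hp : Function.Bijective p) (c : Fin 5 → Fin 2)
    (hc : ∀ a, c (p a) = tB a) (a : Fin 5) : negCountAll GB tB p a = negB c (p a) := by
  unfold negCountAll negB
  have := card_comp p hp (fun u => adjB (p a) u = true ∧ c u ≠ c (p a))
  simp only [hc] at this
  simp only [hc]
  convert this using 2
  ext b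
  rw [Finset.mem_filter, Finset.mem_filter]
  rfl

lemma cost_eq (τ : ℝ) (p : Fin 5 → Fin 5) (hp : Function.Bijective p) (c : Fin 5 → Fin 2)
    (hc : ∀ a, c (p a) = tB a) (a : Fin 5) : costAll GB tB τ p a =
      max 0 (τ - (posB c (p a) : ℝ) / ((posB c (p a) : ℝ) + (negB c (p a) : ℝ))) := by
  unfold costAll
  rw [pos_eq p hp c hc, neg_eq p hp c hc, if_neg]
  intro h
  have hb := (bound c (p a)).1
  rw [← pos_eq p hp c hc, ← neg_eq p hp c hc] at hb
  have h1 : posCount GB tB p a = 0 := by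
    unfold posCount
    rw [Finset.card_eq_zero, Finset.eq_empty_iff_forall_notMem]
    intro x hx
    have : x ∈ nbrs GB p a := by unfold nbrs; simp at hx ⊢; exact hx.1
    simp [h] at this
  have h2 : negCountAll GB tB p a = 0 := by
    unfold negCountAll
    rw [Finset.card_eq_zero, Finset.eq_empty_iff_forall_notMem]
    intro x hx
    have : x ∈ nbrs GB p a := by unfold nbrs; simp at hx ⊢; exact hx.1
    simp [h] at this
  omega

lemma lt_of_neg {τ : ℝ} (hτ : (0.9 : ℝ) < τ) {x y : ℕ} (h3 : x + y ≤ 3) (hy : y ≠ 0) :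
    (x : ℝ) / ((x : ℝ) + (y : ℝ)) < τ := by
  have hy1 : (1 : ℝ) ≤ y := by exact_mod_cast Nat.one_le_iff_ne_zero.2 hy
  have h3' : (x : ℝ) + y ≤ 3 := by exact_mod_cast h3
  have hx : (0 : ℝ) ≤ x := Nat.cast_nonneg x
  rw [div_lt_iff₀ (by linarith)]
  have : 0.9 * ((x : ℝ) + y) ≤ τ * (x + y) := by gcongr
  linarith

lemma ne_zero_iff {τ : ℝ} (hτ : (0.9 : ℝ) < τ) (hτ2 : τ < 1) {x y : ℕ} (h0 : 0 < x + y)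
    (h3 : x + y ≤ 3) :
    max 0 (τ - (x : ℝ) / ((x : ℝ) + (y : ℝ))) ≠ 0 ↔ y ≠ 0 := by
  constructor
  · rintro h rfl
    apply h
    have : (x : ℝ) ≠ 0 := by
      have : x ≠ 0 := by omega
      exact_mod_cast this
    simp [this, hτ2.le]
  · intro h
    have := lt_of_neg hτ h3 h
    exact (lt_max_of_lt_right (by linarith)).ne'

lemma cost_lt_aux {τ : ℝ} (hτ : (0.9 : ℝ) < τ) {x y x' y' : ℕ} (h0 : 0 < x + y)
    (h3 : x + y ≤ 3) (h0' : 0 < x' + y') (h : x * y' < x' * y) :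
    max 0 (τ - (x' : ℝ) / ((x' : ℝ) + (y' : ℝ))) < max 0 (τ - (x : ℝ) / ((x : ℝ) + (y : ℝ))) := by
  have hy : y ≠ 0 := by rintro rfl; simp at h
  have h1 := lt_of_neg hτ h3 hy
  have h2 : (x : ℝ) / ((x : ℝ) + (y : ℝ)) < (x' : ℝ) / ((x' : ℝ) + (y' : ℝ)) := by
    have a1 : (0 : ℝ) < (x : ℝ) + y := by exact_mod_cast h0
    have a2 : (0 : ℝ) < (x' : ℝ) + y' := by exact_mod_cast h0'
    have a3 : (x : ℝ) * y' < x' * y := by exact_mod_cast h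
    rw [div_lt_div_iff₀ a1 a2]
    linarith
  exact max_lt_iff.2 ⟨lt_max_of_lt_right (by linarith), lt_max_of_lt_right (by linarith)⟩

lemma placement_eq {τ : ℝ} (hτ : (0.9 : ℝ) < τ) (hτ2 : τ < 1) (p : Fin 5 → Fin 5)
    (hp : Function.Bijective p) (c : Fin 5 → Fin 2) (hc : ∀ a, c (p a) = tB a) :
    placementCost GB tB τ p = costB c := by
  unfold placementCost costB
  have h := card_comp p hp (fun v => negB c v ≠ 0)
  have h' : (Finset.univ.filter fun v => negB c v ≠ 0).card = (Finset.univ.filter fun b => negB c (p b) ≠ 0).card := by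
    exact h.symm
  rw [h']
  congr 1
  ext a
  simp only [Finset.mem_filter, Finset.mem_univ, true_and]
  rw [cost_eq τ p hp c hc, ne_zero_iff hτ hτ2 (bound c _).1 (bound c _).2]

/-- For every `0.9 < τ < 1` there are a graph and two surjectively used agent types on
`|A| = |V|` agents such that no bijective placement of minimum placement cost is
swap-stable: every optimal placement admits an improving swap. -/
theorem statement16 (τ : ℝ) (hτ1 : (0.9 : ℝ) < τ) (hτ2 : τ < 1) :
    ∃ (N : ℕ) (G : SimpleGraph (Fin N)) (t : Fin N → Fin 2),
      Function.Surjective t ∧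
      ∀ p : Fin N → Fin N, Function.Bijective p →
        (∀ q : Fin N → Fin N, Function.Bijective q →
          placementCost G t τ p ≤ placementCost G t τ q) →
        ¬ SwapStable (costAll G t τ) p := by
  refine ⟨5, GB, tB, by unfold Function.Surjective; decide +kernel, ?_⟩
  intro p hp hopt hst
  let e := Equiv.ofBijective p hp
  let c : Fin 5 → Fin 2 := fun v => tB (e.symm v)
  have hc : ∀ a, c (p a) = tB a := fun a => congrArg tB (e.symm_apply_apply a)
  have h1 := hopt id Function.bijective_id
  rw [placement_eq hτ1 hτ2 p hp c hc,
    placement_eq hτ1 hτ2 id Function.bijective_id tB (fun _ => rfl)] at h1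
  have h2 : (Finset.univ.filter fun v => c v = 1).card = 2 := by
    have h := card_comp p hp (fun v => c v = 1)
    simp only [hc] at h
    refine Eq.trans ?_ card_tB
    exact h.symm
  obtain ⟨u, v, huv, hu, hv⟩ := key c h2 h1
  obtain ⟨a, rfl⟩ := hp.2 u
  obtain ⟨b, rfl⟩ := hp.2 v
  have hab : a ≠ b := fun h => huv (by rw [h])
  have hq : Function.Bijective (p ∘ Equiv.swap a b) := hp.comp (Equiv.swap a b).bijective
  have hc' : ∀ x, (c ∘ Equiv.swap (p a) (p b)) ((p ∘ Equiv.swap a b) x) = tB x := by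
    intro x
    rw [Function.comp_apply, Function.comp_apply, ← hp.1.map_swap, Equiv.swap_apply_self, hc]
  refine hst (p ∘ Equiv.swap a b) ⟨a, b, hab, by congr!, ?_, ?_⟩
  · rw [cost_eq τ p hp c hc, cost_eq τ _ hq _ hc']
    simp only [Function.comp_apply, Equiv.swap_apply_left]
    exact cost_lt_aux hτ1 (bound _ _).1 (bound _ _).2 (bound _ _).1 hu
  · rw [cost_eq τ p hp c hc, cost_eq τ _ hq _ hc']
    simp only [Function.comp_apply, Equiv.swap_apply_right]
    exact cost_lt_aux hτ1 (bound _ _).1 (bound _ _).2 (bound _ _).1 hv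

end Schelling
end
end
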